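/- Any two vertex preorders of C(m,n) are connected by a sequence of edges: for vertices v, w there is a sequence v = v₀, v₁, …, v_k = w of vertex preorders such that consecutive vertices v_i, v_{i+1} are both refined by a common edge preorder. -/

import Mathlib

/-- `Coll m n` is the set of collisions: vertical collisions `mᵢ` for `1 ≤ i < m`
(encoded `Sum.inl`) and horizontal collisions `lⱼ` for `1 ≤ j < n` (encoded `Sum.inr`). -/
abbrev Coll (m n : ℕ) := Fin (m - 1) ⊕ Fin (n - 1)

/-- A vertical and a horizontal collision are orthogonal. -/
def Orthogonal {m n : ℕ} : Coll m n → Coll m n → Prop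
  | Sum.inl _, Sum.inr _ => True
  | Sum.inr _, Sum.inl _ => True
  | _, _ => False

/-- Two distinct collisions of the same kind are parallel. -/
def Parallel {m n : ℕ} : Coll m n → Coll m n → Prop
  | Sum.inl i, Sum.inl j => i ≠ j
  | Sum.inr i, Sum.inr j => i ≠ j
  | _, _ => False

/-- `Between x y g`: `g` is a collision parallel to `x` and `y` whose index lies in the
interval spanned by the indices of `x` and `y`. -/
def Between {m n : ℕ} : Coll m n → Coll m n → Coll m n → Prop
  | Sum.inl i, Sum.inl j, Sum.inl s => min i j ≤ s ∧ s ≤ max i j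
  | Sum.inr i, Sum.inr j, Sum.inr s => min i j ≤ s ∧ s ≤ max i j
  | _, _, _ => False

/-- Strict comparison in a preorder `R`. -/
def StrictR {m n : ℕ} (R : Coll m n → Coll m n → Prop) (x y : Coll m n) : Prop :=
  R x y ∧ ¬ R y x

/-- `z` is an orthogonal link between the parallel collisions `x` and `y`:
`z` is orthogonal to them and `x ≤ z ≤ y` or `y ≤ z ≤ x`. -/
def IsLink {m n : ℕ} (R : Coll m n → Coll m n → Prop) (x y z : Coll m n) : Prop :=
  Orthogonal x z ∧ ((R x z ∧ R z y) ∨ (R y z ∧ R z x))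

/-- `g` is a gap between the parallel collisions `x` and `y`: its index is between theirs
and `x < g > y` strictly. -/
def IsGap {m n : ℕ} (R : Coll m n → Coll m n → Prop) (x y g : Coll m n) : Prop :=
  Between x y g ∧ StrictR R x g ∧ StrictR R y g

/-- A good rectangular preorder on `Coll m n`: a reflexive transitive relation such that
orthogonal collisions are always comparable, and parallel collisions are comparable iff
there is an orthogonal link between them or there is no gap between them. -/
structure IsGoodRect {m n : ℕ} (R : Coll m n → Coll m n → Prop) : Prop where
  refl : ∀ x, R x x
  trans : ∀ x y z, R x y → R y z → R x z
  orth : ∀ x y, Orthogonal x y → R x y ∨ R y x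
  par : ∀ x y, Parallel x y →
    ((R x y ∨ R y x) ↔ ((∃ z, IsLink R x y z) ∨ ¬ ∃ g, IsGap R x y g))

/-- `P` refines `Q`: every comparison of `P` holds in `Q`. -/
def Refines {m n : ℕ} (P Q : Coll m n → Coll m n → Prop) : Prop :=
  ∀ x y, P x y → Q x y

/-- A vertex preorder: a good rectangular preorder in which equivalence implies equality. -/
def IsVertexP {m n : ℕ} (R : Coll m n → Coll m n → Prop) : Prop :=
  IsGoodRect R ∧ ∀ x y, R x y → R y x → x = y

/-- An edge preorder: a good rectangular preorder with exactly one equivalence class of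
size two (the pair `{a,b}`), all other classes being singletons. -/
def IsEdgeP {m n : ℕ} (R : Coll m n → Coll m n → Prop) : Prop :=
  IsGoodRect R ∧ ∃ a b : Coll m n, a ≠ b ∧ R a b ∧ R b a ∧
    ∀ x y : Coll m n, x ≠ y → R x y → R y x → (x = a ∧ y = b) ∨ (x = b ∧ y = a)

/-- Two vertex preorders are adjacent if some edge preorder is refined by both. -/
def AdjV {m n : ℕ} (v w : Coll m n → Coll m n → Prop) : Prop :=
  IsVertexP v ∧ IsVertexP w ∧
    ∃ E : Coll m n → Coll m n → Prop, IsEdgeP E ∧ Refines v E ∧ Refines w E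

/-!
A good rectangular preorder can be recovered from any function `f` to a linear order that is
monotone and strictly monotone for it: orthogonal pairs are compared by `f`, so `f` sees the links,
and the highest collision between `x` and `y` is comparable to both, so `f` sees the gaps.
Conversely every `f` defines a good preorder `rankRel f`. Hence every vertex preorder is `rankRel e`
for an enumeration `e`, namely any of its linear extensions. Two enumerations differ by adjacent
transpositions. Identifying the two values that such a transposition exchanges gives a preorder
refined by both vertices; either it is an edge, or the two collisions are incomparable in it and
then both vertices are equal to it.
-/

section Collisions

variable {m n : ℕ} {x y z g : Coll m n}

lemma orthogonal_comm : Orthogonal x y ↔ Orthogonal y x := by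
  cases x <;> cases y <;> rfl

lemma orthogonal_congr_left (h : ¬ Orthogonal x y) : Orthogonal x z ↔ Orthogonal y z := by
  cases x <;> cases y <;> cases z <;> simp_all [Orthogonal]

lemma parallel_iff : Parallel x y ↔ x ≠ y ∧ ¬ Orthogonal x y := by
  cases x <;> cases y <;> simp [Parallel, Orthogonal]

lemma between_comm : Between x y g ↔ Between y x g := by
  cases x <;> cases y <;> cases g <;> simp [Between, min_comm, max_comm]

lemma Between.eq_of_self (h : Between x x g) : g = x := by
  cases x <;> cases g <;> simp_all [Between, le_antisymm_iff]

lemma Between.not_orthogonal (h : Between x y g) : ¬ Orthogonal x y := by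
  cases x <;> cases y <;> simp_all [Between, Orthogonal]

lemma Between.trans_left (hy : Between x y z) (hz : Between x z g) : Between x y g := by
  cases x <;> cases y <;> cases z <;> cases g <;> simp only [Between] at * <;> grind

lemma Between.trans_right (hx : Between x y z) (hz : Between y z g) : Between x y g :=
  between_comm.1 ((between_comm.1 hx).trans_left hz)

lemma Between.or_of_not_orthogonal (hg : Between x z g) (h : ¬ Orthogonal x y) :
    Between x y g ∨ Between y z g := by
  cases x <;> cases y <;> cases z <;> cases g <;> simp only [Between, Orthogonal] at * <;> grind

end Collisions

section Rankings

variable {m n : ℕ} {α β : Type*} {x y z g : Coll m n} {R : Coll m n → Coll m n → Prop}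

/-- A ranking of a relation `R` on collisions: a map to an ordered type that is monotone and
strictly monotone for `R`. It may tie `R`-incomparable collisions. -/
structure IsRanking [Preorder α] (R : Coll m n → Coll m n → Prop) (f : Coll m n → α) : Prop where
  le : ∀ x y, R x y → f x ≤ f y
  lt : ∀ x y, StrictR R x y → f x < f y

lemma isRanking_of_injective [PartialOrder α] {f : Coll m n → α} (hf : Function.Injective f)
    (hle : ∀ x y, R x y → f x ≤ f y) : IsRanking R f where
  le := hle
  lt x y h := (hle x y h.1).lt_of_ne fun heq => by
    obtain rfl := hf heq
    exact h.2 h.1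

variable [LinearOrder α] [LinearOrder β] {f : Coll m n → α}

/-- The counterpart for a function `f` of the existence of an orthogonal link. -/
def Linked (f : Coll m n → α) (x y : Coll m n) : Prop :=
  ∃ z, Orthogonal x z ∧ f z ∈ Set.uIcc (f x) (f y)

/-- The counterpart for a function `f` of the absence of a gap. It holds vacuously for orthogonal
collisions, since nothing lies between them. -/
def Visible (f : Coll m n → α) (x y : Coll m n) : Prop :=
  ∀ g, Between x y g → f g ≤ max (f x) (f y)

/-- The good rectangular preorder that has `f` as a ranking. -/
def rankRel (f : Coll m n → α) (x y : Coll m n) : Prop :=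
  f x ≤ f y ∧ (Linked f x y ∨ Visible f x y)

lemma visible_comm : Visible f x y ↔ Visible f y x := by
  simp only [Visible, between_comm (x := x), max_comm (f x)]

lemma visible_self : Visible f x x := fun g hg => by simp [hg.eq_of_self]

lemma visible_of_orthogonal (h : Orthogonal x y) : Visible f x y :=
  fun _ hg => absurd h hg.not_orthogonal

lemma linked_comm (h : ¬ Orthogonal x y) : Linked f x y ↔ Linked f y x := by
  simp only [Linked, orthogonal_congr_left h, Set.uIcc_comm (f x)]

lemma linked_or_visible_comm : Linked f x y ∨ Visible f x y ↔ Linked f y x ∨ Visible f y x := by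
  by_cases h : Orthogonal x y
  · simp [visible_of_orthogonal h, visible_of_orthogonal (orthogonal_comm.1 h)]
  · rw [linked_comm h, visible_comm]

lemma exists_forall_between_le_of_not_visible (h : ¬ Visible f x y) :
    ∃ t, Between x y t ∧ max (f x) (f y) < f t ∧ ∀ g, Between x y g → f g ≤ f t := by
  simp only [Visible, not_forall, not_le] at h
  obtain ⟨g, hg, hlt⟩ := h
  obtain ⟨t, ht, htop⟩ := {k | Between x y k}.exists_max_image f (Set.toFinite _) ⟨g, hg⟩
  exact ⟨t, ht, hlt.trans_le (htop g hg), htop⟩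

namespace IsRanking

lemma rel_iff_le (hf : IsRanking R f) (h : R x y ∨ R y x) : R x y ↔ f x ≤ f y :=
  ⟨hf.le x y, fun hle => by_contra fun hxy =>
    (hf.lt y x ⟨h.resolve_left hxy, hxy⟩).not_ge hle⟩

lemma strictR_iff_lt (hf : IsRanking R f) (h : R x y ∨ R y x) : StrictR R x y ↔ f x < f y := by
  rw [StrictR, hf.rel_iff_le h, hf.rel_iff_le h.symm, lt_iff_le_not_ge]

lemma isLink_iff (hf : IsRanking R f) (horth : ∀ x y, Orthogonal x y → R x y ∨ R y x)
    (hxy : ¬ Orthogonal x y) :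
    IsLink R x y z ↔ Orthogonal x z ∧ f z ∈ Set.uIcc (f x) (f y) := by
  refine and_congr_right fun hxz => ?_
  have hyz : Orthogonal y z := (orthogonal_congr_left hxy).1 hxz
  have hx := horth x z hxz
  have hy := horth y z hyz
  rw [Set.mem_uIcc, hf.rel_iff_le hx, hf.rel_iff_le hx.symm, hf.rel_iff_le hy,
    hf.rel_iff_le hy.symm]

lemma not_visible_of_isGap (hf : IsRanking R f) (hg : IsGap R x y g) : ¬ Visible f x y :=
  fun h => (h g hg.1).not_gt (max_lt (hf.lt x g hg.2.1) (hf.lt y g hg.2.2))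

lemma exists_isGap_iff (hf : IsRanking R f) (hvis : ∀ x y, Visible f x y → R x y ∨ R y x) :
    (∃ g, IsGap R x y g) ↔ ¬ Visible f x y := by
  refine ⟨fun ⟨g, hg⟩ => hf.not_visible_of_isGap hg, fun h => ?_⟩
  obtain ⟨t, ht, hlt, htop⟩ := exists_forall_between_le_of_not_visible h
  have hxt : Visible f x t := fun g hg => le_max_of_le_right (htop g (ht.trans_left hg))
  have hyt : Visible f y t := fun g hg => le_max_of_le_right (htop g (ht.trans_right hg))
  exact ⟨t, ht, (hf.strictR_iff_lt (hvis x t hxt)).2 (max_lt_iff.1 hlt).1,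
    (hf.strictR_iff_lt (hvis y t hyt)).2 (max_lt_iff.1 hlt).2⟩

lemma isLink_or_not_isGap_iff (hf : IsRanking R f)
    (hvis : ∀ x y, Visible f x y → R x y ∨ R y x) (hxy : ¬ Orthogonal x y) :
    ((∃ z, IsLink R x y z) ∨ ¬ ∃ g, IsGap R x y g) ↔ Linked f x y ∨ Visible f x y := by
  have horth : ∀ x y, Orthogonal x y → R x y ∨ R y x :=
    fun x y h => hvis x y (visible_of_orthogonal h)
  simp only [hf.isLink_iff horth hxy, hf.exists_isGap_iff hvis, not_not, Linked]

end IsRanking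

lemma rankRel_or_rankRel_iff : rankRel f x y ∨ rankRel f y x ↔ Linked f x y ∨ Visible f x y := by
  rw [rankRel, rankRel, ← linked_or_visible_comm, ← or_and_right]
  exact and_iff_right (le_total _ _)

lemma isRanking_rankRel (f : Coll m n → α) : IsRanking (rankRel f) f where
  le _ _ h := h.1
  lt _ _ h := lt_of_not_ge fun hle => h.2 ⟨hle, linked_or_visible_comm.1 h.1.2⟩

lemma rankRel_trans (hxy : rankRel f x y) (hyz : rankRel f y z) : rankRel f x z := by
  obtain ⟨hle, hxy⟩ := hxy
  obtain ⟨hle', hyz⟩ := hyz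
  refine ⟨hle.trans hle', ?_⟩
  by_cases hxz : Orthogonal x z
  · exact Or.inr (visible_of_orthogonal hxz)
  by_cases ho : Orthogonal x y
  · exact Or.inl ⟨y, ho, Set.mem_uIcc_of_le hle hle'⟩
  simp only [Linked, Visible, Set.uIcc_of_le, max_eq_right, hle, hle', hle.trans hle']
    at hxy hyz ⊢
  rcases hxy with ⟨w, hw, hwx, hwy⟩ | hxy
  · exact Or.inl ⟨w, hw, hwx, hwy.trans hle'⟩
  rcases hyz with ⟨w, hw, hwy, hwz⟩ | hyz
  · exact Or.inl ⟨w, (orthogonal_congr_left ho).2 hw, hle.trans hwy, hwz⟩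
  · exact Or.inr fun g hg => (hg.or_of_not_orthogonal ho).elim
      (fun h => (hxy g h).trans hle') (hyz g)

theorem isGoodRect_rankRel (f : Coll m n → α) : IsGoodRect (rankRel f) where
  refl _ := ⟨le_rfl, Or.inr visible_self⟩
  trans _ _ _ := rankRel_trans
  orth _ _ h := rankRel_or_rankRel_iff.2 (Or.inr (visible_of_orthogonal h))
  par x y h := by
    rw [rankRel_or_rankRel_iff, (isRanking_rankRel f).isLink_or_not_isGap_iff
      (fun _ _ hvis => rankRel_or_rankRel_iff.2 (Or.inr hvis)) (parallel_iff.1 h).2]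

lemma IsGoodRect.comparable_of_visible (hR : IsGoodRect R) (hf : IsRanking R f)
    (h : Visible f x y) : R x y ∨ R y x := by
  by_cases ho : Orthogonal x y
  · exact hR.orth x y ho
  rcases eq_or_ne x y with rfl | hne
  · exact Or.inl (hR.refl x)
  · exact (hR.par x y (parallel_iff.2 ⟨hne, ho⟩)).2
      (Or.inr fun ⟨_, hg⟩ => hf.not_visible_of_isGap hg h)

lemma IsGoodRect.comparable_iff (hR : IsGoodRect R) (hf : IsRanking R f) :
    R x y ∨ R y x ↔ Linked f x y ∨ Visible f x y := by
  by_cases ho : Orthogonal x y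
  · exact iff_of_true (hR.orth x y ho) (Or.inr (visible_of_orthogonal ho))
  rcases eq_or_ne x y with rfl | hne
  · exact iff_of_true (Or.inl (hR.refl x)) (Or.inr visible_self)
  · rw [hR.par x y (parallel_iff.2 ⟨hne, ho⟩),
      hf.isLink_or_not_isGap_iff (fun _ _ => hR.comparable_of_visible hf) ho]

theorem IsGoodRect.eq_rankRel (hR : IsGoodRect R) (hf : IsRanking R f) : R = rankRel f := by
  ext x y
  rw [rankRel, ← hR.comparable_iff hf]
  exact ⟨fun h => ⟨hf.le x y h, Or.inl h⟩, fun ⟨hle, h⟩ => (hf.rel_iff_le h).2 hle⟩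

lemma refines_rankRel_comp {φ : α → β} (hφ : Monotone φ) (f : Coll m n → α) :
    Refines (rankRel f) (rankRel (φ ∘ f)) := by
  rintro x y ⟨hle, h⟩
  refine ⟨hφ hle, h.imp ?_ ?_⟩
  · exact fun ⟨z, hz, hmem⟩ => ⟨z, hz, hφ.mapsTo_uIcc hmem⟩
  · exact fun h g hg => (hφ (h g hg)).trans_eq hφ.map_max

lemma isVertexP_rankRel (hf : Function.Injective f) : IsVertexP (rankRel f) :=
  ⟨isGoodRect_rankRel f, fun _ _ h h' => hf (h.1.antisymm h'.1)⟩

lemma isVertexP_or_isEdgeP_rankRel {a b : Coll m n}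
    (h : ∀ x y, x ≠ y → f x = f y → x = a ∧ y = b ∨ x = b ∧ y = a) :
    IsVertexP (rankRel f) ∨ IsEdgeP (rankRel f) := by
  have hequiv : ∀ x y, x ≠ y → rankRel f x y → rankRel f y x →
      x = a ∧ y = b ∨ x = b ∧ y = a :=
    fun x y hne hxy hyx => h x y hne (hxy.1.antisymm hyx.1)
  by_cases hab : a ≠ b ∧ rankRel f a b ∧ rankRel f b a
  · exact Or.inr ⟨isGoodRect_rankRel f, a, b, hab.1, hab.2.1, hab.2.2, hequiv⟩
  · refine Or.inl ⟨isGoodRect_rankRel f, fun x y hxy hyx => by_contra fun hne => hab ?_⟩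
    rcases hequiv x y hne hxy hyx with ⟨rfl, rfl⟩ | ⟨rfl, rfl⟩
    · exact ⟨hne, hxy, hyx⟩
    · exact ⟨Ne.symm hne, hyx, hxy⟩

end Rankings

lemma exists_equiv_fin_monotone (ι : Type*) [Fintype ι] [PartialOrder ι] :
    ∃ e : ι ≃ Fin (Fintype.card ι), Monotone e := by
  have : Fintype (LinearExtension ι) := ‹Fintype ι›
  have hcard : Fintype.card (LinearExtension ι) = Fintype.card ι := Fintype.card_congr (.refl ι)
  let o := Fintype.orderIsoFinOfCardEq (LinearExtension ι) hcard
  exact ⟨o.symm.toEquiv, o.symm.monotone.comp toLinearExtension.monotone⟩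

section Vertices

variable {m n k : ℕ} {v w P Q : Coll m n → Coll m n → Prop}

lemma IsVertexP.exists_linearExtension (hv : IsVertexP v) :
    ∃ e : Coll m n ≃ Fin (Fintype.card (Coll m n)), ∀ x y, v x y → e x ≤ e y :=
  -- `lt` is given explicitly, as `Coll m n` already carries the order of a disjoint sum.
  let _ : PartialOrder (Coll m n) :=
    { le := v
      lt := StrictR v
      le_refl := hv.1.refl
      le_trans := hv.1.trans
      lt_iff_le_not_ge := fun _ _ => .rfl
      le_antisymm := hv.2 }
  exists_equiv_fin_monotone (Coll m n)

lemma IsVertexP.eq_of_refines (hQ : IsVertexP Q) (hP : IsGoodRect P) (h : Refines P Q) :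
    P = Q := by
  obtain ⟨e, he⟩ := hQ.exists_linearExtension
  have hPe : P = rankRel e :=
    hP.eq_rankRel (isRanking_of_injective e.injective fun x y hxy => he x y (h x y hxy))
  have hQe : Q = rankRel e := hQ.1.eq_rankRel (isRanking_of_injective e.injective he)
  rw [hPe, hQe]

lemma IsVertexP.exists_eq_rankRel (hv : IsVertexP v) :
    ∃ e : Coll m n ≃ Fin (Fintype.card (Coll m n)), v = rankRel e :=
  hv.exists_linearExtension.imp fun e he => hv.1.eq_rankRel (isRanking_of_injective e.injective he)

lemma reflTransGen_adjV_of_refines (hv : IsVertexP v) (hw : IsVertexP w)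
    (hP : IsVertexP P ∨ IsEdgeP P) (hvP : Refines v P) (hwP : Refines w P) :
    Relation.ReflTransGen AdjV v w := by
  rcases hP with hP | hP
  · rw [hP.eq_of_refines hv.1 hvP, hP.eq_of_refines hw.1 hwP]
  · exact .single ⟨hv, hw, P, hP, hvP, hwP⟩

lemma predAbove_eq_predAbove_iff {i : Fin k} {s t : Fin (k + 1)} :
    i.predAbove s = i.predAbove t ↔
      s = t ∨ s = i.castSucc ∧ t = i.succ ∨ s = i.succ ∧ t = i.castSucc := by
  simp only [Fin.predAbove, Fin.lt_def, Fin.ext_iff, Fin.val_castSucc, Fin.val_succ]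
  split_ifs <;> simp only [Fin.val_pred, Fin.coe_castPred] <;> omega

lemma predAbove_swap (i : Fin k) (t : Fin (k + 1)) :
    i.predAbove (Equiv.swap i.castSucc i.succ t) = i.predAbove t := by
  rw [Equiv.swap_apply_def]
  split_ifs with h h' <;> simp [*]

lemma reflTransGen_adjV_swap (e : Coll m n ≃ Fin (k + 1)) (i : Fin k) :
    Relation.ReflTransGen AdjV (rankRel e) (rankRel (Equiv.swap i.castSucc i.succ ∘ e)) := by
  have hmono : Monotone i.predAbove := Fin.predAbove_right_monotone i
  have hmerge : IsVertexP (rankRel (i.predAbove ∘ e)) ∨ IsEdgeP (rankRel (i.predAbove ∘ e)) := by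
    refine isVertexP_or_isEdgeP_rankRel (a := e.symm i.castSucc) (b := e.symm i.succ)
      fun x y hne hxy => ?_
    simpa only [Equiv.eq_symm_apply] using
      (predAbove_eq_predAbove_iff.1 hxy).resolve_left (e.injective.ne hne)
  have hswap : i.predAbove ∘ Equiv.swap i.castSucc i.succ ∘ e = i.predAbove ∘ e :=
    funext fun x => predAbove_swap i (e x)
  exact reflTransGen_adjV_of_refines (isVertexP_rankRel e.injective)
    (isVertexP_rankRel ((Equiv.injective _).comp e.injective)) hmerge
    (refines_rankRel_comp hmono e) (hswap ▸ refines_rankRel_comp hmono _)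

lemma reflTransGen_adjV_perm (π : Equiv.Perm (Fin (k + 1))) (e : Coll m n ≃ Fin (k + 1)) :
    Relation.ReflTransGen AdjV (rankRel e) (rankRel (π ∘ e)) := by
  have hπ : π ∈ Submonoid.closure (Set.range fun i : Fin k => Equiv.swap i.castSucc i.succ) := by
    simp [Equiv.Perm.mclosure_swap_castSucc_succ]
  induction hπ using Submonoid.closure_induction generalizing e with
  | mem _ hσ =>
    obtain ⟨i, rfl⟩ := hσ
    exact reflTransGen_adjV_swap e i
  | one => exact .refl
  | mul σ τ _ _ hσ hτ => exact (hτ e).trans (hσ (e.trans τ))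

lemma reflTransGen_adjV_rankRel (e e' : Coll m n ≃ Fin k) :
    Relation.ReflTransGen AdjV (rankRel e) (rankRel e') := by
  cases k with
  | zero => rw [Subsingleton.elim e e']
  | succ k => simpa [Function.comp_def] using reflTransGen_adjV_perm (e.symm.trans e') e

end Vertices

/-- Any two vertex preorders of `C(m,n)` are connected by a sequence of edges. -/
theorem vertices_edge_connected {m n : ℕ}
    (v w : Coll m n → Coll m n → Prop)
    (hv : IsVertexP v) (hw : IsVertexP w) :
    Relation.ReflTransGen AdjV v w := by
  obtain ⟨e, rfl⟩ := hv.exists_eq_rankRel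
  obtain ⟨e', rfl⟩ := hw.exists_eq_rankRel
  exact reflTransGen_adjV_rankRel e e'
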